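/- Let (A, Δ, Δ') be a commutative Hopf brace with antipodes S (for Δ) and T (for Δ'), set ρ(x) = x_{(-1)} ⊗ x_{(0)} = S(x_1) x_{21'} ⊗ x_{22'} and φ(y) = y_{[0]} ⊗ y_{[1]} = (T(y_{1'}))_{(-1)} y_{2'} ⊗ (T(y_{1'}))_{(0)} y_{3'}, and let c(x ⊗ y) = x_{(-1)} y_{[0]} ⊗ x_{(0)} y_{[1]}. Define γ: A ⊗ A → A ⊗ A by γ(x ⊗ y) = x y_{(-1)} ⊗ y_{(0)}. Then γ is bijective with inverse γ⁻¹(x ⊗ y) = x T(y_{(-1)}) ⊗ y_{(0)}, and γ⁻¹ ∘ c ∘ γ = σ, where σ(x ⊗ y) = y_2 ⊗ x S(y_1) y_3. -/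

import Mathlib

open TensorProduct

noncomputable section

namespace HopfPaper

/-- A Hopf algebra structure (comultiplication `Δ`, counit `ε`, antipode `S`) on a
given `k`-algebra `H`, expressed in terms of `k`-linear maps.  Together with the
algebra structure of `H` this is exactly the data of a Hopf algebra
`(H, m, 1, Δ, ε, S)` over the field `k`. -/
structure HopfStruct (k : Type*) [Field k] (H : Type*) [Ring H] [Algebra k H] where
  /-- the comultiplication -/
  Δ : H →ₗ[k] H ⊗[k] H
  /-- the counit -/
  ε : H →ₗ[k] k
  /-- the antipode -/
  S : H →ₗ[k] H
  coassoc : ∀ h : H,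
    TensorProduct.map (LinearMap.id : H →ₗ[k] H) Δ (Δ h)
      = TensorProduct.assoc k H H H
          (TensorProduct.map Δ (LinearMap.id : H →ₗ[k] H) (Δ h))
  counit_left : ∀ h : H,
    TensorProduct.lid k H (TensorProduct.map ε (LinearMap.id : H →ₗ[k] H) (Δ h)) = h
  counit_right : ∀ h : H,
    TensorProduct.rid k H (TensorProduct.map (LinearMap.id : H →ₗ[k] H) ε (Δ h)) = h
  comul_mul : ∀ a b : H, Δ (a * b) = Δ a * Δ b
  comul_one : Δ 1 = 1
  counit_mul : ∀ a b : H, ε (a * b) = ε a * ε b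
  counit_one : ε 1 = 1
  antipode_left : ∀ h : H,
    LinearMap.mul' k H (TensorProduct.map S (LinearMap.id : H →ₗ[k] H) (Δ h))
      = algebraMap k H (ε h)
  antipode_right : ∀ h : H,
    LinearMap.mul' k H (TensorProduct.map (LinearMap.id : H →ₗ[k] H) S (Δ h))
      = algebraMap k H (ε h)

variable (k : Type*) [Field k]

/-- `m ↦ m ⊗ 1`. -/
def ι₁ (M N : Type*) [Ring M] [Algebra k M] [Ring N] [Algebra k N] :
    M →ₗ[k] M ⊗[k] N :=
  (TensorProduct.mk k M N).flip 1

/-- `n ↦ 1 ⊗ n`. -/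
def ι₂ (M N : Type*) [Ring M] [Algebra k M] [Ring N] [Algebra k N] :
    N →ₗ[k] M ⊗[k] N :=
  TensorProduct.mk k M N 1

/-- multiplication of three factors, `x ⊗ (y ⊗ z) ↦ x * y * z`. -/
def mul₃ (T : Type*) [Ring T] [Algebra k T] : T ⊗[k] (T ⊗[k] T) →ₗ[k] T :=
  (LinearMap.mul' k T).comp
    (TensorProduct.map (LinearMap.id : T →ₗ[k] T) (LinearMap.mul' k T))

/-- multiplication of four factors. -/
def mul₄ (T : Type*) [Ring T] [Algebra k T] :
    T ⊗[k] (T ⊗[k] (T ⊗[k] T)) →ₗ[k] T :=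
  (LinearMap.mul' k T).comp
    (TensorProduct.map (LinearMap.id : T →ₗ[k] T) (mul₃ k T))

/-- The left hand side `h_{1'} ⊗ h_{2'1} ⊗ h_{2'2}` of the Hopf brace compatibility
condition (2.1), i.e. `(id ⊗ Δ) ∘ Δ'`. -/
def braceLHS (H : Type*) [Ring H] [Algebra k H] (Δ Δ' : H →ₗ[k] H ⊗[k] H) :
    H →ₗ[k] H ⊗[k] (H ⊗[k] H) :=
  (TensorProduct.map (LinearMap.id : H →ₗ[k] H) Δ).comp Δ'

/-- The right hand side `h_{11'}S(h_2)h_{31'} ⊗ h_{12'} ⊗ h_{32'}` of the Hopf brace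
compatibility condition (2.1):  it is obtained from the twofold comultiplication
`h ↦ h_1 ⊗ (h_2 ⊗ h_3)` (using `Δ`) by applying `Δ'` to the first and third legs,
`S` to the middle leg, placing the results in the appropriate tensor positions of
`H ⊗ (H ⊗ H)` (filled with `1`s) and multiplying. -/
def braceRHS (H : Type*) [Ring H] [Algebra k H] (Δ Δ' : H →ₗ[k] H ⊗[k] H)
    (S : H →ₗ[k] H) : H →ₗ[k] H ⊗[k] (H ⊗[k] H) :=
  (mul₃ k (H ⊗[k] (H ⊗[k] H))).comp
    ((TensorProduct.map
        ((TensorProduct.map (LinearMap.id : H →ₗ[k] H) (ι₁ k H H)).comp Δ')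
        (TensorProduct.map ((ι₁ k H (H ⊗[k] H)).comp S)
          ((TensorProduct.map (LinearMap.id : H →ₗ[k] H) (ι₂ k H H)).comp Δ'))).comp
      ((TensorProduct.map (LinearMap.id : H →ₗ[k] H) Δ).comp Δ))

/-- A Hopf brace on the `k`-algebra `H` : two Hopf algebra structures sharing the
multiplication and unit of `H`, subject to the compatibility condition (2.1):
`h_{1'} ⊗ h_{2'1} ⊗ h_{2'2} = h_{11'}S(h_2)h_{31'} ⊗ h_{12'} ⊗ h_{32'}`. -/
structure HopfBrace (H : Type*) [Ring H] [Algebra k H] where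
  fst : HopfStruct k H
  snd : HopfStruct k H
  compat : ∀ h : H,
    braceLHS k H fst.Δ snd.Δ h = braceRHS k H fst.Δ snd.Δ fst.S h

/-- The coaction `ρ(h) = S(h_1) h_{21'} ⊗ h_{22'}` of Lemma 2.5. -/
def ρmap (H : Type*) [Ring H] [Algebra k H] (Δ Δ' : H →ₗ[k] H ⊗[k] H)
    (S : H →ₗ[k] H) : H →ₗ[k] H ⊗[k] H :=
  (LinearMap.mul' k (H ⊗[k] H)).comp
    ((TensorProduct.map ((ι₁ k H H).comp S) Δ').comp Δ)

/-- The coaction `φ(a) = (T(a_{1'}))_{(-1)} a_{2'} ⊗ (T(a_{1'}))_{(0)} a_{3'}`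
of Lemma 2.8(2), where `x_{(-1)} ⊗ x_{(0)} = ρ(x)`. -/
def φmap (H : Type*) [Ring H] [Algebra k H] (Δ Δ' : H →ₗ[k] H ⊗[k] H)
    (S T : H →ₗ[k] H) : H →ₗ[k] H ⊗[k] H :=
  (LinearMap.mul' k (H ⊗[k] H)).comp
    ((TensorProduct.map ((ρmap k H Δ Δ' S).comp T)
        (LinearMap.id : H ⊗[k] H →ₗ[k] H ⊗[k] H)).comp
      ((TensorProduct.map (LinearMap.id : H →ₗ[k] H) Δ').comp Δ'))

/-- `ρ : A →ₗ H ⊗ A` is a coassociative counital left coaction of the coalgebra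
`(H, ΔH, εH)`. -/
def LeftCoaction (A H : Type*) [Ring A] [Algebra k A] [Ring H] [Algebra k H]
    (ΔH : H →ₗ[k] H ⊗[k] H) (εH : H →ₗ[k] k) (ρ : A →ₗ[k] H ⊗[k] A) : Prop :=
  (∀ a : A,
    TensorProduct.map (LinearMap.id : H →ₗ[k] H) ρ (ρ a)
      = TensorProduct.assoc k H H A
          (TensorProduct.map ΔH (LinearMap.id : A →ₗ[k] A) (ρ a))) ∧
  (∀ a : A,
    TensorProduct.lid k A (TensorProduct.map εH (LinearMap.id : A →ₗ[k] A) (ρ a)) = a)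

/-- `φ : H →ₗ H ⊗ A` is a coassociative counital right coaction of the coalgebra
`(A, ΔA, εA)`. -/
def RightCoaction (A H : Type*) [Ring A] [Algebra k A] [Ring H] [Algebra k H]
    (ΔA : A →ₗ[k] A ⊗[k] A) (εA : A →ₗ[k] k) (φ : H →ₗ[k] H ⊗[k] A) : Prop :=
  (∀ h : H,
    TensorProduct.map (LinearMap.id : H →ₗ[k] H) ΔA (φ h)
      = TensorProduct.assoc k H A A
          (TensorProduct.map φ (LinearMap.id : A →ₗ[k] A) (φ h))) ∧
  (∀ h : H,
    TensorProduct.rid k H (TensorProduct.map (LinearMap.id : H →ₗ[k] H) εA (φ h)) = h)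

/-- a linear map which is moreover multiplicative and unital. -/
def IsAlgebraMorphism (M N : Type*) [Ring M] [Algebra k M] [Ring N] [Algebra k N]
    (f : M →ₗ[k] N) : Prop :=
  (∀ a b : M, f (a * b) = f a * f b) ∧ f 1 = 1

/-- `a ↦ a_{1(-1)} a_{2(-1)} ⊗ a_{1(0)} ⊗ a_{2(0)}`, the right hand side of the
comodule coalgebra condition. -/
def comodCoalgRHS (A H : Type*) [Ring A] [Algebra k A] [Ring H] [Algebra k H]
    (ΔA : A →ₗ[k] A ⊗[k] A) (ρ : A →ₗ[k] H ⊗[k] A) :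
    A →ₗ[k] H ⊗[k] (A ⊗[k] A) :=
  (LinearMap.mul' k (H ⊗[k] (A ⊗[k] A))).comp
    ((TensorProduct.map
        ((TensorProduct.map (LinearMap.id : H →ₗ[k] H) (ι₁ k A A)).comp ρ)
        ((TensorProduct.map (LinearMap.id : H →ₗ[k] H) (ι₂ k A A)).comp ρ)).comp ΔA)

/-- The two conditions making a left `H`-comodule `(A, ρ)` a comodule coalgebra:
`a_{(-1)} ⊗ Δ(a_{(0)}) = a_{1(-1)} a_{2(-1)} ⊗ a_{1(0)} ⊗ a_{2(0)}` and
`a_{(-1)} ε(a_{(0)}) = ε(a) 1`. -/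
def IsComodCoalg (A H : Type*) [Ring A] [Algebra k A] [Ring H] [Algebra k H]
    (ΔA : A →ₗ[k] A ⊗[k] A) (εA : A →ₗ[k] k) (ρ : A →ₗ[k] H ⊗[k] A) : Prop :=
  (∀ a : A,
    TensorProduct.map (LinearMap.id : H →ₗ[k] H) ΔA (ρ a)
      = comodCoalgRHS k A H ΔA ρ a) ∧
  (∀ a : A,
    TensorProduct.rid k H (TensorProduct.map (LinearMap.id : H →ₗ[k] H) εA (ρ a))
      = algebraMap k H (εA a))

/-- `a ↦ a_{1(-1)} a_{2(-1)[0]} ⊗ a_{1(0)} a_{2(-1)[1]} ⊗ a_{2(0)}`, the right hand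
side of (HM2). -/
def HM2RHS (A H : Type*) [Ring A] [Algebra k A] [Ring H] [Algebra k H]
    (ΔA : A →ₗ[k] A ⊗[k] A) (ρ : A →ₗ[k] H ⊗[k] A) (φ : H →ₗ[k] H ⊗[k] A) :
    A →ₗ[k] H ⊗[k] (A ⊗[k] A) :=
  (LinearMap.mul' k (H ⊗[k] (A ⊗[k] A))).comp
    ((TensorProduct.map
        ((TensorProduct.map (LinearMap.id : H →ₗ[k] H) (ι₁ k A A)).comp ρ)
        ((TensorProduct.assoc k H A A).toLinearMap.comp
          ((TensorProduct.map φ (LinearMap.id : A →ₗ[k] A)).comp ρ))).comp ΔA)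

/-- `h ↦ h_{1[0]} ⊗ h_{1[1](-1)} h_{2[0]} ⊗ h_{1[1](0)} h_{2[1]}`, the right hand
side of (HM3). -/
def HM3RHS (A H : Type*) [Ring A] [Algebra k A] [Ring H] [Algebra k H]
    (ΔH : H →ₗ[k] H ⊗[k] H) (ρ : A →ₗ[k] H ⊗[k] A) (φ : H →ₗ[k] H ⊗[k] A) :
    H →ₗ[k] H ⊗[k] (H ⊗[k] A) :=
  (LinearMap.mul' k (H ⊗[k] (H ⊗[k] A))).comp
    ((TensorProduct.map
        ((TensorProduct.map (LinearMap.id : H →ₗ[k] H) ρ).comp φ)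
        ((ι₂ k H (H ⊗[k] A)).comp φ)).comp ΔH)

/-- A Hopf matched pair `(A, H)` (Definition 3.1): `ρ` makes `A` a left
`H`-comodule algebra, `φ` makes `H` a right `A`-comodule algebra, and the
compatibility conditions (HM1)–(HM4) hold. -/
def IsHopfMatchedPair (A H : Type*) [Ring A] [Algebra k A] [Ring H] [Algebra k H]
    (ΔA : A →ₗ[k] A ⊗[k] A) (εA : A →ₗ[k] k)
    (ΔH : H →ₗ[k] H ⊗[k] H) (εH : H →ₗ[k] k)
    (ρ : A →ₗ[k] H ⊗[k] A) (φ : H →ₗ[k] H ⊗[k] A) : Prop :=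
  LeftCoaction k A H ΔH εH ρ ∧
  IsAlgebraMorphism k A (H ⊗[k] A) ρ ∧
  RightCoaction k A H ΔA εA φ ∧
  IsAlgebraMorphism k H (H ⊗[k] A) φ ∧
  -- (HM1)
  (∀ a : A,
    TensorProduct.rid k H (TensorProduct.map (LinearMap.id : H →ₗ[k] H) εA (ρ a))
      = algebraMap k H (εA a)) ∧
  (∀ h : H,
    TensorProduct.lid k A (TensorProduct.map εH (LinearMap.id : A →ₗ[k] A) (φ h))
      = algebraMap k A (εH h)) ∧
  -- (HM2)
  (∀ a : A,
    TensorProduct.map (LinearMap.id : H →ₗ[k] H) ΔA (ρ a) = HM2RHS k A H ΔA ρ φ a) ∧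
  -- (HM3)
  (∀ h : H,
    TensorProduct.assoc k H H A
        (TensorProduct.map ΔH (LinearMap.id : A →ₗ[k] A) (φ h))
      = HM3RHS k A H ΔH ρ φ h) ∧
  -- (HM4)
  (∀ (a : A) (h : H), φ h * ρ a = ρ a * φ h)

/-- Equation (3.2): `Δ(a) = a_{1'} T(a_{2'(-1)}) ⊗ a_{2'(0)}`. -/
def Δfromρ (A : Type*) [Ring A] [Algebra k A] (Δ' : A →ₗ[k] A ⊗[k] A)
    (T : A →ₗ[k] A) (ρ : A →ₗ[k] A ⊗[k] A) : A →ₗ[k] A ⊗[k] A :=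
  (LinearMap.mul' k (A ⊗[k] A)).comp
    ((TensorProduct.map (ι₁ k A A)
        ((TensorProduct.map T (LinearMap.id : A →ₗ[k] A)).comp ρ)).comp Δ')

/-- Equation (3.3): `S(a) = a_{(-1)} T(a_{(0)})`. -/
def Sfromρ (A : Type*) [Ring A] [Algebra k A] (T : A →ₗ[k] A)
    (ρ : A →ₗ[k] A ⊗[k] A) : A →ₗ[k] A :=
  (LinearMap.mul' k A).comp
    ((TensorProduct.map (LinearMap.id : A →ₗ[k] A) T).comp ρ)

/-- The comultiplication `Δ_R(h) = R · Δ(h) · R⁻¹` obtained by conjugating `Δ` with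
an invertible element `R ∈ H ⊗ H`. -/
def conjComul (H : Type*) [Ring H] [Algebra k H] (R Rinv : H ⊗[k] H)
    (Δ : H →ₗ[k] H ⊗[k] H) : H →ₗ[k] H ⊗[k] H :=
  (LinearMap.mulLeft k R).comp ((LinearMap.mulRight k Rinv).comp Δ)

/-- The braiding candidate `c(x ⊗ y) = x_{(-1)} y_{[0]} ⊗ x_{(0)} y_{[1]}` of
Proposition 2.9, i.e. `c = mult ∘ (ρ ⊗ φ)`. -/
def cmap (A : Type*) [Ring A] [Algebra k A] (Δ Δ' : A →ₗ[k] A ⊗[k] A)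
    (S T : A →ₗ[k] A) : A ⊗[k] A →ₗ[k] A ⊗[k] A :=
  (LinearMap.mul' k (A ⊗[k] A)).comp
    (TensorProduct.map (ρmap k A Δ Δ' S) (φmap k A Δ Δ' S T))

/-- `γ(x ⊗ y) = x y_{(-1)} ⊗ y_{(0)}` for a coaction `ρ(y) = y_{(-1)} ⊗ y_{(0)}`. -/
def γmap (A : Type*) [Ring A] [Algebra k A] (ρ : A →ₗ[k] A ⊗[k] A) :
    A ⊗[k] A →ₗ[k] A ⊗[k] A :=
  (LinearMap.mul' k (A ⊗[k] A)).comp (TensorProduct.map (ι₁ k A A) ρ)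

/-- `σ(x ⊗ y) = y_2 ⊗ x S(y_1) y_3`. -/
def σmap (A : Type*) [Ring A] [Algebra k A] (Δ : A →ₗ[k] A ⊗[k] A)
    (S : A →ₗ[k] A) : A ⊗[k] A →ₗ[k] A ⊗[k] A :=
  (mul₄ k (A ⊗[k] A)).comp
    ((TensorProduct.map (ι₂ k A A)
        (TensorProduct.map ((ι₂ k A A).comp S)
          (TensorProduct.map (ι₁ k A A) (ι₂ k A A)))).comp
      (TensorProduct.map (LinearMap.id : A →ₗ[k] A)
        ((TensorProduct.map (LinearMap.id : A →ₗ[k] A) Δ).comp Δ)))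

/-- The usual tensor product comultiplication `Δ̂` on `A ⊗ H`:
`a ⊗ h ↦ (a_1 ⊗ h_1) ⊗ (a_2 ⊗ h_2)`. -/
def hatΔ (A H : Type*) [Ring A] [Algebra k A] [Ring H] [Algebra k H]
    (ΔA : A →ₗ[k] A ⊗[k] A) (ΔH : H →ₗ[k] H ⊗[k] H) :
    A ⊗[k] H →ₗ[k] (A ⊗[k] H) ⊗[k] (A ⊗[k] H) :=
  (TensorProduct.tensorTensorTensorComm k A A H H).toLinearMap.comp
    (TensorProduct.map ΔA ΔH)

/-- The bicrossed coproduct comultiplication on `A ⊗ H`: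
`Δ̃(a ⊗ h) = a_1 ⊗ a_{2(-1)} h_{1[0]} ⊗ a_{2(0)} h_{1[1]} ⊗ h_2`. -/
def bicrossΔ (A H : Type*) [Ring A] [Algebra k A] [Ring H] [Algebra k H]
    (ΔA : A →ₗ[k] A ⊗[k] A) (ΔH : H →ₗ[k] H ⊗[k] H)
    (ρ : A →ₗ[k] H ⊗[k] A) (φ : H →ₗ[k] H ⊗[k] A) :
    A ⊗[k] H →ₗ[k] (A ⊗[k] H) ⊗[k] (A ⊗[k] H) :=
  (LinearMap.mul' k ((A ⊗[k] H) ⊗[k] (A ⊗[k] H))).comp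
    (TensorProduct.map
      -- a ↦ (a_1 ⊗ a_{2(-1)}) ⊗ (a_{2(0)} ⊗ 1)
      ((TensorProduct.map (LinearMap.id : A ⊗[k] H →ₗ[k] A ⊗[k] H) (ι₁ k A H)).comp
        ((TensorProduct.assoc k A H A).symm.toLinearMap.comp
          ((TensorProduct.map (LinearMap.id : A →ₗ[k] A) ρ).comp ΔA)))
      -- h ↦ (1 ⊗ h_{1[0]}) ⊗ (h_{1[1]} ⊗ h_2)
      ((TensorProduct.map (ι₂ k A H) (LinearMap.id : A ⊗[k] H →ₗ[k] A ⊗[k] H)).comp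
        ((TensorProduct.assoc k H A H).toLinearMap.comp
          ((TensorProduct.map φ (LinearMap.id : H →ₗ[k] H)).comp ΔH))))

/-- The antipode of the bicrossed coproduct:
`S̃(a ⊗ h) = S_A(h_{[1]}) S_A(a_{(0)}) ⊗ S_H(h_{[0]}) S_H(a_{(-1)})`. -/
def bicrossS (A H : Type*) [Ring A] [Algebra k A] [Ring H] [Algebra k H]
    (SA : A →ₗ[k] A) (SH : H →ₗ[k] H)
    (ρ : A →ₗ[k] H ⊗[k] A) (φ : H →ₗ[k] H ⊗[k] A) :
    A ⊗[k] H →ₗ[k] A ⊗[k] H :=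
  (LinearMap.mul' k (A ⊗[k] H)).comp
    ((TensorProduct.map
        ((TensorProduct.map SA SH).comp ((TensorProduct.comm k H A).toLinearMap.comp φ))
        ((TensorProduct.map SA SH).comp ((TensorProduct.comm k H A).toLinearMap.comp ρ))).comp
      (TensorProduct.comm k A H).toLinearMap)

/-- The left hand side `h_{[0]} ⊗ h_{[1]1} ⊗ h_{[1]2}` of equation (4.1), where the
`A`-leg is comultiplied with `Δ'`. -/
def eq41LHS (A H : Type*) [Ring A] [Algebra k A] [Ring H] [Algebra k H]
    (Δ'A : A →ₗ[k] A ⊗[k] A) (φ : H →ₗ[k] H ⊗[k] A) :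
    H →ₗ[k] H ⊗[k] (A ⊗[k] A) :=
  (TensorProduct.map (LinearMap.id : H →ₗ[k] H) Δ'A).comp φ

/-- The right hand side `h_{1[0]} S(h_2) h_{3[0]} ⊗ h_{1[1]} ⊗ h_{3[1]}` of
equation (4.1). -/
def eq41RHS (A H : Type*) [Ring A] [Algebra k A] [Ring H] [Algebra k H]
    (ΔH : H →ₗ[k] H ⊗[k] H) (SH : H →ₗ[k] H) (φ : H →ₗ[k] H ⊗[k] A) :
    H →ₗ[k] H ⊗[k] (A ⊗[k] A) :=
  (mul₃ k (H ⊗[k] (A ⊗[k] A))).comp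
    ((TensorProduct.map
        ((TensorProduct.map (LinearMap.id : H →ₗ[k] H) (ι₁ k A A)).comp φ)
        (TensorProduct.map ((ι₁ k H (A ⊗[k] A)).comp SH)
          ((TensorProduct.map (LinearMap.id : H →ₗ[k] H) (ι₂ k A A)).comp φ))).comp
      ((TensorProduct.map (LinearMap.id : H →ₗ[k] H) ΔH).comp ΔH))

/-- `x ↦ x_{11'} S(x_2) ⊗ x_{12'} ⊗ 1 ∈ H ⊗ (H ⊗ A)`, an auxiliary map for
equations (4.2) and (4.3). -/
def LHmap (A H : Type*) [Ring A] [Algebra k A] [Ring H] [Algebra k H]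
    (ΔH Δ'H : H →ₗ[k] H ⊗[k] H) (SH : H →ₗ[k] H) :
    H →ₗ[k] H ⊗[k] (H ⊗[k] A) :=
  (LinearMap.mul' k (H ⊗[k] (H ⊗[k] A))).comp
    ((TensorProduct.map
        ((TensorProduct.map (LinearMap.id : H →ₗ[k] H) (ι₁ k H A)).comp Δ'H)
        ((ι₁ k H (H ⊗[k] A)).comp SH)).comp ΔH)

/-- The right hand side
`a_{(-1)11'} S(a_{(-1)2}) a_{(0)(-1)'} ⊗ a_{(-1)12'} ⊗ a_{(0)(0)'}` of
equation (4.2). -/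
def eq42RHS (A H : Type*) [Ring A] [Algebra k A] [Ring H] [Algebra k H]
    (ΔH Δ'H : H →ₗ[k] H ⊗[k] H) (SH : H →ₗ[k] H)
    (ρ ρ' : A →ₗ[k] H ⊗[k] A) :
    A →ₗ[k] H ⊗[k] (H ⊗[k] A) :=
  (LinearMap.mul' k (H ⊗[k] (H ⊗[k] A))).comp
    ((TensorProduct.map (LHmap k A H ΔH Δ'H SH)
        ((TensorProduct.map (LinearMap.id : H →ₗ[k] H) (ι₂ k H A)).comp ρ')).comp ρ)

/-- The right hand side
`h_{1[0]11'} S(h_{1[0]2}) h_{1[1](-1)'} h_2 ⊗ h_{1[0]12'} ⊗ h_{1[1](0)'}` of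
equation (4.3). -/
def eq43RHS (A H : Type*) [Ring A] [Algebra k A] [Ring H] [Algebra k H]
    (ΔH Δ'H : H →ₗ[k] H ⊗[k] H) (SH : H →ₗ[k] H)
    (ρ' : A →ₗ[k] H ⊗[k] A) (φ : H →ₗ[k] H ⊗[k] A) :
    H →ₗ[k] H ⊗[k] (H ⊗[k] A) :=
  (LinearMap.mul' k (H ⊗[k] (H ⊗[k] A))).comp
    ((TensorProduct.map
        ((LinearMap.mul' k (H ⊗[k] (H ⊗[k] A))).comp
          ((TensorProduct.map (LHmap k A H ΔH Δ'H SH)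
              ((TensorProduct.map (LinearMap.id : H →ₗ[k] H) (ι₂ k H A)).comp ρ')).comp φ))
        (ι₁ k H (H ⊗[k] A))).comp ΔH)

section SkewBrace

variable {G : Type*} [Group G] {op : G → G → G} {e : G} {inv' : G → G}

lemma skewBrace_op_one (compat : ∀ f g h, op f (g * h) = op f g * f⁻¹ * op f h) (f : G) :
    op f 1 = f := by
  have h := compat f 1 1
  rw [mul_one, mul_assoc, left_eq_mul, inv_mul_eq_one] at h
  exact h.symm

lemma skewBrace_unit_eq_one (compat : ∀ f g h, op f (g * h) = op f g * f⁻¹ * op f h)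
    (one_op : ∀ f, op e f = f) : e = 1 :=
  (skewBrace_op_one compat e).symm.trans (one_op 1)

lemma skewBrace_lambda_lambda (compat : ∀ f g h, op f (g * h) = op f g * f⁻¹ * op f h)
    (assoc : ∀ f g h, op (op f g) h = op f (op g h)) (f g h : G) :
    f⁻¹ * op f (g⁻¹ * op g h) = (op f g)⁻¹ * op (op f g) h := by
  have hinv : op f g * f⁻¹ * op f g⁻¹ = f := by
    rw [← compat, mul_inv_cancel, skewBrace_op_one compat]
  have hinv' : op f g⁻¹ = f * (op f g)⁻¹ * f := by
    rw [eq_inv_mul_of_mul_eq hinv]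
    group
  rw [compat, hinv', assoc]
  group

lemma skewBrace_lambda_cancel (compat : ∀ f g h, op f (g * h) = op f g * f⁻¹ * op f h)
    (assoc : ∀ f g h, op (op f g) h = op f (op g h)) (one_op : ∀ f, op e f = f)
    {f f' : G} (hf : op f f' = e) (h : G) :
    f⁻¹ * op f (f'⁻¹ * op f' h) = h := by
  rw [skewBrace_lambda_lambda compat assoc, hf, one_op, skewBrace_unit_eq_one compat one_op]
  group

lemma skewBrace_conj (assoc : ∀ f g h, op (op f g) h = op f (op g h))
    (one_op : ∀ f, op e f = f) (op_inv : ∀ f, op f (inv' f) = e)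
    {f g h : G} (hg : f⁻¹ * op f h = g) :
    g⁻¹ * op g (op (op (inv' g) f) h) = g⁻¹ * (f * g) := by
  rw [assoc, ← assoc g, op_inv, one_op, ← hg]
  group

end SkewBrace

section ProductMap

variable {k}
variable {A R : Type*} [CommRing A] [Algebra k A] [CommRing R] [Algebra k R]

lemma mul'_map_eq_productMap (f g : A →ₐ[k] R) (t : A ⊗[k] A) :
    LinearMap.mul' k R (TensorProduct.map f.toLinearMap g.toLinearMap t) =
      Algebra.TensorProduct.productMap f g t := by
  induction t with
  | zero => simp
  | tmul x y => simp
  | add x y hx hy => rw [map_add, map_add, hx, hy, map_add]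

lemma productMap_includeLeft_includeRight :
    Algebra.TensorProduct.productMap Algebra.TensorProduct.includeLeft
      Algebra.TensorProduct.includeRight = AlgHom.id k (A ⊗[k] A) := by
  ext <;> simp

end ProductMap

namespace HopfStruct

variable {k}
variable {A : Type*} [CommRing A] [Algebra k A] (D : HopfStruct k A)
variable {R R' : Type*} [CommRing R] [Algebra k R] [CommRing R'] [Algebra k R']

/-- The Mathlib Hopf algebra associated with a `HopfStruct`. -/
abbrev toHopfAlgebra : HopfAlgebra k A :=
  letI : Coalgebra k A :=
    { comul := D.Δ
      counit := D.ε
      coassoc := LinearMap.ext fun a => (D.coassoc a).symm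
      rTensor_counit_comp_comul := LinearMap.ext fun a =>
        (TensorProduct.lid k A).injective <| (D.counit_left a).trans (by simp)
      lTensor_counit_comp_comul := LinearMap.ext fun a =>
        (TensorProduct.rid k A).injective <| (D.counit_right a).trans (by simp) }
  letI : Bialgebra k A :=
    Bialgebra.mk' k A D.counit_one (D.counit_mul _ _) D.comul_one (D.comul_mul _ _)
  { antipode := D.S
    mul_antipode_rTensor_comul := LinearMap.ext D.antipode_left
    mul_antipode_lTensor_comul := LinearMap.ext D.antipode_right }

/-- The convolution product of two points. -/
def conv (f g : A →ₐ[k] R) : A →ₐ[k] R :=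
  letI := D.toHopfAlgebra
  (WithConv.toConv f * WithConv.toConv g).ofConv

/-- The convolution inverse of a point. -/
def convInv (f : A →ₐ[k] R) : A →ₐ[k] R :=
  letI := D.toHopfAlgebra
  f.comp (HopfAlgebra.antipodeAlgHom k A)

lemma conv_apply (f g : A →ₐ[k] R) (a : A) :
    D.conv f g a = Algebra.TensorProduct.productMap f g (D.Δ a) :=
  letI := D.toHopfAlgebra
  AlgHom.convMul_apply (WithConv.toConv f) (WithConv.toConv g) a

lemma convInv_apply (f : A →ₐ[k] R) (a : A) : D.convInv f a = f (D.S a) := rfl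

lemma comp_conv (P : R →ₐ[k] R') (f g : A →ₐ[k] R) :
    P.comp (D.conv f g) = D.conv (P.comp f) (P.comp g) :=
  letI := D.toHopfAlgebra
  AlgHom.comp_convMul_distrib P (WithConv.toConv f) (WithConv.toConv g)

lemma comp_convInv (P : R →ₐ[k] R') (f : A →ₐ[k] R) :
    P.comp (D.convInv f) = D.convInv (P.comp f) := rfl

/-- The unit of convolution. -/
def convOne : A →ₐ[k] R :=
  letI := D.toHopfAlgebra
  (1 : WithConv (A →ₐ[k] R)).ofConv

lemma conv_assoc (f g h : A →ₐ[k] R) : D.conv (D.conv f g) h = D.conv f (D.conv g h) :=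
  letI := D.toHopfAlgebra
  congrArg WithConv.ofConv
    (mul_assoc (WithConv.toConv f) (WithConv.toConv g) (WithConv.toConv h))

lemma convOne_conv (f : A →ₐ[k] R) : D.conv D.convOne f = f :=
  letI := D.toHopfAlgebra
  congrArg WithConv.ofConv (one_mul (WithConv.toConv f))

lemma convInv_conv (f : A →ₐ[k] R) : D.conv (D.convInv f) f = D.convOne := by
  have h : D.conv (D.convInv (.id k A)) (.id k A) = D.convOne := by
    ext a
    rw [conv_apply, ← mul'_map_eq_productMap]
    exact D.antipode_left a
  have hf := D.comp_conv f (D.convInv (.id k A)) (.id k A)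
  rw [h, comp_convInv, AlgHom.comp_id] at hf
  rw [← hf]
  ext a
  exact f.commutes _

variable (R) in
/-- The group of `R`-points of the affine group scheme represented by a commutative
Hopf algebra. -/
abbrev pointsGroup : Group (A →ₐ[k] R) :=
  letI : Mul (A →ₐ[k] R) := ⟨D.conv⟩
  letI : Inv (A →ₐ[k] R) := ⟨D.convInv⟩
  letI : One (A →ₐ[k] R) := ⟨D.convOne⟩
  Group.ofLeftAxioms D.conv_assoc D.convOne_conv D.convInv_conv

lemma conv_convInv (f : A →ₐ[k] R) : D.conv f (D.convInv f) = D.convOne :=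
  let := D.pointsGroup R
  mul_inv_cancel f

lemma conv_includeLeft_includeRight :
    (D.conv Algebra.TensorProduct.includeLeft
      Algebra.TensorProduct.includeRight : A →ₐ[k] A ⊗[k] A).toLinearMap = D.Δ := by
  ext a
  rw [AlgHom.toLinearMap_apply, conv_apply, productMap_includeLeft_includeRight, AlgHom.id_apply]

lemma ι₁_comp_antipode :
    (ι₁ k A A).comp D.S =
      (D.convInv Algebra.TensorProduct.includeLeft : A →ₐ[k] A ⊗[k] A).toLinearMap := rfl

end HopfStruct

section Points

variable {k}
variable {A : Type*} [CommRing A] [Algebra k A]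
variable {R R' : Type*} [CommRing R] [Algebra k R] [CommRing R'] [Algebra k R']

open Algebra.TensorProduct (productMap includeLeft includeRight)

lemma comp_productMap (P : R →ₐ[k] R') (f g : A →ₐ[k] R) :
    P.comp (productMap f g) = productMap (P.comp f) (P.comp g) := by
  ext <;> simp

lemma ι₁_apply (a : A) : ι₁ k A A a = a ⊗ₜ[k] 1 := rfl

lemma ι₂_apply (a : A) : ι₂ k A A a = 1 ⊗ₜ[k] a := rfl

lemma algHom_mul₃ {B C E : Type*} [AddCommGroup B] [Module k B] [AddCommGroup C] [Module k C]
    [AddCommGroup E] [Module k E] (P : R →ₐ[k] R')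
    (X : B →ₗ[k] R) (Y : C →ₗ[k] R) (Z : E →ₗ[k] R) (t : B ⊗[k] (C ⊗[k] E)) :
    P (mul₃ k R (TensorProduct.map X (TensorProduct.map Y Z) t)) =
      mul₃ k R' (TensorProduct.map (P.toLinearMap ∘ₗ X)
        (TensorProduct.map (P.toLinearMap ∘ₗ Y) (P.toLinearMap ∘ₗ Z)) t) := by
  have : P.toLinearMap ∘ₗ mul₃ k R ∘ₗ TensorProduct.map X (TensorProduct.map Y Z) =
      mul₃ k R' ∘ₗ TensorProduct.map (P.toLinearMap ∘ₗ X)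
        (TensorProduct.map (P.toLinearMap ∘ₗ Y) (P.toLinearMap ∘ₗ Z)) := by
    ext x y z
    simp [mul₃]
  exact LinearMap.congr_fun this t

/-- `f · (g · h)` computed from the twofold comultiplication. -/
lemma mul₃_map_comul (D : HopfStruct k A) (f g h : A →ₐ[k] R) (a : A) :
    mul₃ k R (TensorProduct.map f.toLinearMap
      (TensorProduct.map g.toLinearMap h.toLinearMap)
        (TensorProduct.map LinearMap.id D.Δ (D.Δ a))) = D.conv f (D.conv g h) a := by
  rw [D.conv_apply]
  generalize D.Δ a = t
  induction t with
  | zero => simp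
  | tmul x y =>
    simp only [TensorProduct.map_tmul, mul₃, LinearMap.comp_apply, LinearMap.id_apply,
      mul'_map_eq_productMap, LinearMap.mul'_apply, Algebra.TensorProduct.productMap_apply_tmul,
      D.conv_apply, AlgHom.toLinearMap_apply]
  | add x y hx hy => simp only [map_add, hx, hy]

namespace HopfBrace

variable (HB : HopfBrace k A)

lemma conv_compat (f g h : A →ₐ[k] R) :
    HB.snd.conv f (HB.fst.conv g h) =
      HB.fst.conv (HB.snd.conv f g) (HB.fst.conv (HB.fst.convInv f) (HB.snd.conv f h)) := by
  ext a
  let P : A ⊗[k] (A ⊗[k] A) →ₐ[k] R := productMap f (productMap g h)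
  have key := congrArg P (HB.compat a)
  have hL : P (braceLHS k A HB.fst.Δ HB.snd.Δ a) = HB.snd.conv f (HB.fst.conv g h) a := by
    rw [HopfStruct.conv_apply, braceLHS, LinearMap.comp_apply]
    generalize HB.snd.Δ a = t
    induction t with
    | zero => simp
    | tmul x y => simp [P, HopfStruct.conv_apply]
    | add x y hx hy => simp only [map_add, hx, hy]
  have hX : P.toLinearMap ∘ₗ (TensorProduct.map LinearMap.id (ι₁ k A A)).comp HB.snd.Δ =
      (HB.snd.conv f g).toLinearMap := by
    ext x
    simp only [LinearMap.comp_apply, AlgHom.toLinearMap_apply, HopfStruct.conv_apply]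
    generalize HB.snd.Δ x = t
    induction t with
    | zero => simp
    | tmul x y => simp [P, ι₁_apply]
    | add x y hx hy => simp only [map_add, hx, hy]
  have hZ : P.toLinearMap ∘ₗ (TensorProduct.map LinearMap.id (ι₂ k A A)).comp HB.snd.Δ =
      (HB.snd.conv f h).toLinearMap := by
    ext x
    simp only [LinearMap.comp_apply, AlgHom.toLinearMap_apply, HopfStruct.conv_apply]
    generalize HB.snd.Δ x = t
    induction t with
    | zero => simp
    | tmul x y => simp [P, ι₂_apply]
    | add x y hx hy => simp only [map_add, hx, hy]
  have hY : P.toLinearMap ∘ₗ (ι₁ k A (A ⊗[k] A)).comp HB.fst.S =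
      (HB.fst.convInv f).toLinearMap := by
    ext x
    simp [P, ι₁, HopfStruct.convInv_apply]
  rw [hL, braceRHS, LinearMap.comp_apply, LinearMap.comp_apply, algHom_mul₃, hX, hY, hZ,
    LinearMap.comp_apply, mul₃_map_comul] at key
  exact key

/-- The action `λ_f(g) = f⁻¹ · (f ∘ g)` of the skew brace of points. -/
def lam (f g : A →ₐ[k] R) : A →ₐ[k] R :=
  HB.fst.conv (HB.fst.convInv f) (HB.snd.conv f g)

lemma comp_lam (P : R →ₐ[k] R') (f g : A →ₐ[k] R) :
    P.comp (HB.lam f g) = HB.lam (P.comp f) (P.comp g) := by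
  simp only [lam, HopfStruct.comp_conv, HopfStruct.comp_convInv]

lemma points_compat (f g h : A →ₐ[k] R) :
    letI := HB.fst.pointsGroup R
    HB.snd.conv f (g * h) = HB.snd.conv f g * f⁻¹ * HB.snd.conv f h :=
  (HB.conv_compat f g h).trans (HB.fst.conv_assoc _ _ _).symm

lemma lam_lam_convInv (f g : A →ₐ[k] R) : HB.lam f (HB.lam (HB.snd.convInv f) g) = g :=
  let := HB.fst.pointsGroup R
  skewBrace_lambda_cancel (op := HB.snd.conv) HB.points_compat HB.snd.conv_assoc
    HB.snd.convOne_conv (HB.snd.conv_convInv f) g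

lemma lam_convInv_lam (f g : A →ₐ[k] R) : HB.lam (HB.snd.convInv f) (HB.lam f g) = g :=
  let := HB.fst.pointsGroup R
  skewBrace_lambda_cancel (op := HB.snd.conv) HB.points_compat HB.snd.conv_assoc
    HB.snd.convOne_conv (HB.snd.convInv_conv f) g

lemma lam_conj {f g h : A →ₐ[k] R} (hg : HB.lam f h = g) :
    HB.lam g (HB.snd.conv (HB.snd.conv (HB.snd.convInv g) f) h) =
      HB.fst.conv (HB.fst.convInv g) (HB.fst.conv f g) :=
  let := HB.fst.pointsGroup R
  skewBrace_conj (op := HB.snd.conv) HB.snd.conv_assoc HB.snd.convOne_conv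
    HB.snd.conv_convInv hg

/-- The coaction `ρ` as a point. -/
lemma ρmap_eq :
    ρmap k A HB.fst.Δ HB.snd.Δ HB.fst.S = (HB.lam includeLeft includeRight).toLinearMap := by
  ext a
  rw [AlgHom.toLinearMap_apply, lam, HopfStruct.conv_apply, ← mul'_map_eq_productMap,
    HB.snd.conv_includeLeft_includeRight, ← HB.fst.ι₁_comp_antipode]
  rfl

lemma map_antipode_comp_ρmap :
    (TensorProduct.map HB.snd.S (LinearMap.id : A →ₗ[k] A)).comp
        (ρmap k A HB.fst.Δ HB.snd.Δ HB.fst.S) =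
      (HB.lam (HB.snd.convInv includeLeft) includeRight).toLinearMap := by
  have h : TensorProduct.map HB.snd.S (LinearMap.id : A →ₗ[k] A) =
      (productMap (HB.snd.convInv includeLeft) includeRight : A ⊗[k] A →ₐ[k] _).toLinearMap := by
    ext x y
    simp [HopfStruct.convInv_apply]
  rw [h, ρmap_eq, ← AlgHom.comp_toLinearMap, comp_lam, Algebra.TensorProduct.productMap_left,
    Algebra.TensorProduct.productMap_right]

lemma φmap_eq :
    φmap k A HB.fst.Δ HB.snd.Δ HB.fst.S HB.snd.S =
      (HB.snd.conv (HB.snd.convInv (HB.lam includeLeft includeRight))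
        (HB.snd.conv includeLeft includeRight)).toLinearMap := by
  ext a
  rw [AlgHom.toLinearMap_apply, HopfStruct.conv_apply, ← mul'_map_eq_productMap,
    HB.snd.conv_includeLeft_includeRight, φmap, ρmap_eq, LinearMap.comp_apply,
    LinearMap.comp_apply, LinearMap.comp_apply, TensorProduct.map_map]
  rfl

lemma σmap_eq (z : A ⊗[k] A) :
    σmap k A HB.fst.Δ HB.fst.S z =
      productMap includeRight (HB.fst.conv (HB.fst.convInv includeRight)
        (HB.fst.conv includeLeft includeRight)) z := by
  induction z with
  | zero => simp
  | add x y hx hy => rw [map_add, map_add, hx, hy]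
  | tmul x y =>
    rw [Algebra.TensorProduct.productMap_apply_tmul, ← mul₃_map_comul]
    rfl

lemma γmap_eq (w : A →ₐ[k] A ⊗[k] A) (z : A ⊗[k] A) :
    γmap k A w.toLinearMap z = productMap includeLeft w z := by
  rw [← mul'_map_eq_productMap]
  rfl

lemma cmap_eq (z : A ⊗[k] A) :
    cmap k A HB.fst.Δ HB.snd.Δ HB.fst.S HB.snd.S z =
      productMap (HB.lam includeLeft includeRight)
        (HB.snd.conv (HB.snd.convInv (HB.lam includeLeft includeRight))
          (HB.snd.conv includeLeft includeRight)) z := by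
  rw [← mul'_map_eq_productMap, cmap, LinearMap.comp_apply]
  rw [ρmap_eq, φmap_eq]

theorem gamma_conjugation_of_commRing :
    (∀ z : A ⊗[k] A,
      γmap k A (ρmap k A HB.fst.Δ HB.snd.Δ HB.fst.S)
        (γmap k A
          ((TensorProduct.map HB.snd.S (LinearMap.id : A →ₗ[k] A)).comp
            (ρmap k A HB.fst.Δ HB.snd.Δ HB.fst.S)) z) = z) ∧
    (∀ z : A ⊗[k] A,
      γmap k A
        ((TensorProduct.map HB.snd.S (LinearMap.id : A →ₗ[k] A)).comp
          (ρmap k A HB.fst.Δ HB.snd.Δ HB.fst.S))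
        (γmap k A (ρmap k A HB.fst.Δ HB.snd.Δ HB.fst.S) z) = z) ∧
    (∀ z : A ⊗[k] A,
      γmap k A
        ((TensorProduct.map HB.snd.S (LinearMap.id : A →ₗ[k] A)).comp
          (ρmap k A HB.fst.Δ HB.snd.Δ HB.fst.S))
        (cmap k A HB.fst.Δ HB.snd.Δ HB.fst.S HB.snd.S
          (γmap k A (ρmap k A HB.fst.Δ HB.snd.Δ HB.fst.S) z))
      = σmap k A HB.fst.Δ HB.fst.S z) := by
  rw [map_antipode_comp_ρmap]
  simp only [ρmap_eq, γmap_eq, cmap_eq, σmap_eq]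
  refine ⟨fun z => ?_, fun z => ?_, fun z => ?_⟩
  · rw [← AlgHom.comp_apply, comp_productMap, comp_lam, HopfStruct.comp_convInv,
      Algebra.TensorProduct.productMap_left, Algebra.TensorProduct.productMap_right,
      lam_convInv_lam, productMap_includeLeft_includeRight, AlgHom.id_apply]
  · rw [← AlgHom.comp_apply, comp_productMap, comp_lam,
      Algebra.TensorProduct.productMap_left, Algebra.TensorProduct.productMap_right,
      lam_lam_convInv, productMap_includeLeft_includeRight, AlgHom.id_apply]
  · rw [← AlgHom.comp_apply, ← AlgHom.comp_apply, AlgHom.comp_assoc]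
    simp only [comp_productMap, comp_lam, HopfStruct.comp_conv, HopfStruct.comp_convInv,
      Algebra.TensorProduct.productMap_left, Algebra.TensorProduct.productMap_right,
      lam_lam_convInv]
    rw [← HB.snd.conv_assoc, lam_conj HB (lam_lam_convInv HB _ _)]

end HopfBrace

end Points


/-- from the proof of Proposition 2.9.  Let `(A, Δ, Δ')` be a
commutative Hopf brace, `ρ(x) = S(x_1) x_{21'} ⊗ x_{22'}`,
`φ(y) = (T(y_{1'}))_{(-1)} y_{2'} ⊗ (T(y_{1'}))_{(0)} y_{3'}`,
`c(x ⊗ y) = x_{(-1)} y_{[0]} ⊗ x_{(0)} y_{[1]}` and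
`γ(x ⊗ y) = x y_{(-1)} ⊗ y_{(0)}`.  Then `γ` is bijective with inverse
`γ⁻¹(x ⊗ y) = x T(y_{(-1)}) ⊗ y_{(0)}`, and `γ⁻¹ ∘ c ∘ γ = σ`, where
`σ(x ⊗ y) = y_2 ⊗ x S(y_1) y_3`. -/
theorem gamma_conjugation {k : Type*} [Field k] {A : Type*} [Ring A] [Algebra k A]
    (HB : HopfBrace k A) (hcomm : ∀ x y : A, x * y = y * x) :
    (∀ z : A ⊗[k] A,
      γmap k A (ρmap k A HB.fst.Δ HB.snd.Δ HB.fst.S)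
        (γmap k A
          ((TensorProduct.map HB.snd.S (LinearMap.id : A →ₗ[k] A)).comp
            (ρmap k A HB.fst.Δ HB.snd.Δ HB.fst.S)) z) = z) ∧
    (∀ z : A ⊗[k] A,
      γmap k A
        ((TensorProduct.map HB.snd.S (LinearMap.id : A →ₗ[k] A)).comp
          (ρmap k A HB.fst.Δ HB.snd.Δ HB.fst.S))
        (γmap k A (ρmap k A HB.fst.Δ HB.snd.Δ HB.fst.S) z) = z) ∧
    (∀ z : A ⊗[k] A,
      γmap k A
        ((TensorProduct.map HB.snd.S (LinearMap.id : A →ₗ[k] A)).comp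
          (ρmap k A HB.fst.Δ HB.snd.Δ HB.fst.S))
        (cmap k A HB.fst.Δ HB.snd.Δ HB.fst.S HB.snd.S
          (γmap k A (ρmap k A HB.fst.Δ HB.snd.Δ HB.fst.S) z))
      = σmap k A HB.fst.Δ HB.fst.S z) := by
  let _ : CommRing A := { ‹Ring A› with mul_comm := hcomm }
  exact HB.gamma_conjugation_of_commRing

end HopfPaper
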